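/- Let V = V₁ ⊕ ℝe ⊕ V₂ be a real Banach space decomposed as a direct sum of closed subspaces with dim V₂ < ∞ and ‖e‖ = 1, and let Φ : V → ℝ be a C¹ functional. Assume: (a) there exist ρ > 0 and α ≥ 0 such that Φ(u) ≥ α for all u ∈ S_ρ, where S_ρ = closure(V₁ \ B(0,ρ)) ∪ ((ℝ⁺e ⊕ V₁) ∩ ∂B(0,ρ)); (b) there is β ∈ ℝ with Φ(u) ≤ β for all u ∈ V₂ ⊕ ℝe. If Φ satisfies the local Palais–Smale condition (P.S.)_c for every c ∈ [α, β], then Φ possesses a critical value c ∈ [α, β], i.e. there exists u ∈ V with Φ'(u) = 0 and α ≤ Φ(u) ≤ β. -/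

import Mathlib

open Set Filter

/-!
Ekeland's variational principle, applied to `h ↦ max Φ ∘ h` on a large ball of `C(D, V)` around the
inclusion of a large closed ball `D` of `W = ℝe ⊕ V₂`, yields almost critical points with values in
`[α, β]`: at a map `h` minimizing `max Φ ∘ h` up to a small slope, `Φ` must have a small derivative
at some maximum point of `Φ ∘ h`, for otherwise pushing `h` along a descent field would decrease the
maximum too quickly. The Palais–Smale condition then produces a critical point.

The lower bound `α ≤ max Φ ∘ h` holds because the image of every `h` in that ball meets `S_ρ`.
Indeed `h v ∈ S_ρ` as soon as the component of `h v` along `W` is a multiple `s • e` with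
`min s (c * (‖h v‖ - ρ)) = 0`, where `c > 0`. This is an equation between points of `W` which is a
bounded perturbation of `v = 0`, so that Brouwer's theorem solves it on a large ball.

Brouwer's theorem is obtained analytically: for `k` of class `C¹` with compact support and a
polynomial `p`, the integral of `det (1 - t k') * p (‖x - t k‖²)` over the support of `k` is
polynomial in `t`, and constant for small `t` by a change of variables, hence constant up to
`t = 1`. By Weierstrass approximation `p` may be replaced by a continuous bump function supported
near `0`; if `k` had no fixed point, the integral would then vanish at `t = 1` but not at `t = 0`.
-/

section PolynomialMethod

open MeasureTheory Module
open scoped Polynomial Topology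

lemma exists_polynomial_eval_eq_det_one_sub_smul {R M : Type*} [CommRing R] [Nontrivial R]
    [AddCommGroup M] [Module R M] [Module.Free R M] [Module.Finite R M] (f : Module.End R M) :
    ∃ p : R[X], p.natDegree ≤ finrank R M ∧ ∀ t, p.eval t = LinearMap.det (1 - t • f) := by
  classical
  let b := Module.Free.chooseBasis R M
  let A := LinearMap.toMatrix b b f
  refine ⟨((Polynomial.X : R[X]) • (-A).map Polynomial.C + Matrix.map 1 Polynomial.C).det,
    ?_, fun t => ?_⟩
  · rw [finrank_eq_card_chooseBasisIndex]
    exact Polynomial.natDegree_det_X_add_C_le (-A) 1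
  · rw [← Polynomial.coe_evalRingHom, RingHom.map_det, ← LinearMap.det_toMatrix b]
    congr 1
    ext i j
    rcases eq_or_ne i j with rfl | hij
    · simp [A, LinearMap.toMatrix_apply]
      ring
    · simp [A, LinearMap.toMatrix_apply, hij]
      ring

lemma exists_polynomial_eval_eq_integral_eval {X 𝕜 : Type*} [RCLike 𝕜] [MeasurableSpace X]
    {μ : Measure X} {p : X → 𝕜[X]} {d : ℕ} (hd : ∀ x, (p x).natDegree ≤ d)
    (hp : ∀ t, Integrable (fun x => (p x).eval t) μ) :
    ∃ q : 𝕜[X], ∀ t, q.eval t = ∫ x, (p x).eval t ∂μ := by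
  classical
  let s := Finset.range (d + 1)
  have hinj : InjOn (Nat.cast : ℕ → 𝕜) s := Nat.cast_injective.injOn
  refine ⟨Lagrange.interpolate s Nat.cast fun i => ∫ x, (p x).eval (i : 𝕜) ∂μ, fun t => ?_⟩
  have interpolate_p (x : X) :
      (p x).eval t = ∑ i ∈ s, (p x).eval (i : 𝕜) * (Lagrange.basis s Nat.cast i).eval t := by
    have hdeg : (p x).degree < s.card := by
      rw [Finset.card_range]
      exact Polynomial.degree_le_natDegree.trans_lt (mod_cast Nat.lt_succ_of_le (hd x))
    conv_lhs => rw [Lagrange.eq_interpolate hinj hdeg]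
    simp [Lagrange.interpolate_apply, Polynomial.eval_finsetSum]
  simp_rw [interpolate_p]
  rw [integral_finsetSum s fun i _ => (hp i).mul_const _]
  simp [Lagrange.interpolate_apply, Polynomial.eval_finsetSum, integral_mul_const]

lemma tendsto_integral_mul_comp_of_tendstoUniformlyOn {X Y : Type*} [MeasurableSpace X]
    {μ : Measure X} {w : X → ℝ} {u : X → Y} {f : ℕ → Y → ℝ} {g : Y → ℝ} {s : Set Y}
    (hf : TendstoUniformlyOn f g atTop s) (hu : ∀ᵐ x ∂μ, u x ∈ s) (hw : Integrable w μ)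
    (hwf : ∀ n, AEStronglyMeasurable (fun x => w x * f n (u x)) μ)
    (hwg : Integrable (fun x => w x * g (u x)) μ) :
    Tendsto (fun n => ∫ x, w x * f n (u x) ∂μ) atTop (𝓝 (∫ x, w x * g (u x) ∂μ)) := by
  refine tendsto_integral_filter_of_dominated_convergence
    (fun x => ‖w x * g (u x)‖ + ‖w x‖) (.of_forall hwf) ?_ (hwg.norm.add hw.norm) ?_
  · filter_upwards [Metric.tendstoUniformlyOn_iff.1 hf 1 one_pos] with n hn
    filter_upwards [hu] with x hx
    have norm_f_le : ‖f n (u x)‖ ≤ ‖g (u x)‖ + 1 :=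
      norm_le_norm_add_const_of_dist_le (by simpa only [dist_comm] using (hn _ hx).le)
    calc ‖w x * f n (u x)‖ = ‖w x‖ * ‖f n (u x)‖ := norm_mul _ _
      _ ≤ ‖w x‖ * (‖g (u x)‖ + 1) := by gcongr
      _ = ‖w x * g (u x)‖ + ‖w x‖ := by rw [norm_mul]; ring
  · filter_upwards [hu] with x hx
    exact (hf.tendsto_at hx).const_mul _

lemma integral_mul_comp_eq_of_forall_polynomial {X Y : Type*} [MeasurableSpace X]
    [MeasurableSpace Y] {μ : Measure X} {ν : Measure Y} {w u : X → ℝ} {w' u' : Y → ℝ} {a b : ℝ}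
    (hu : ∀ᵐ x ∂μ, u x ∈ Icc a b) (hu' : ∀ᵐ y ∂ν, u' y ∈ Icc a b)
    (hw : ∀ g : ℝ → ℝ, Continuous g → Integrable (fun x => w x * g (u x)) μ)
    (hw' : ∀ g : ℝ → ℝ, Continuous g → Integrable (fun y => w' y * g (u' y)) ν)
    (h : ∀ p : ℝ[X], ∫ x, w x * p.eval (u x) ∂μ = ∫ y, w' y * p.eval (u' y) ∂ν)
    {g : ℝ → ℝ} (hg : Continuous g) :
    ∫ x, w x * g (u x) ∂μ = ∫ y, w' y * g (u' y) ∂ν := by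
  choose p hp using fun n : ℕ => exists_polynomial_near_of_continuousOn a b g hg.continuousOn
    (1 / ((n : ℝ) + 1)) Nat.one_div_pos_of_nat
  have hlim : TendstoUniformlyOn (fun n s => (p n).eval s) g atTop (Icc a b) := by
    refine Metric.tendstoUniformlyOn_iff.2 fun ε hε => ?_
    filter_upwards [tendsto_one_div_add_atTop_nhds_zero_nat.eventually (gt_mem_nhds hε)]
      with n hn s hs
    rw [dist_comm]
    exact (hp n s hs).trans hn
  have hL := tendsto_integral_mul_comp_of_tendstoUniformlyOn hlim hu
    (by simpa using hw 1 continuous_one) (fun n => (hw _ (p n).continuous).1) (hw g hg)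
  have hR := tendsto_integral_mul_comp_of_tendstoUniformlyOn hlim hu'
    (by simpa using hw' 1 continuous_one) (fun n => (hw' _ (p n).continuous).1) (hw' g hg)
  simp only [h] at hL
  exact tendsto_nhds_unique hL hR

end PolynomialMethod

section ChangeOfVariables

open MeasureTheory Function
open scoped Topology NNReal

lemma image_eq_of_bijective_of_eqOn_compl {X : Type*} {f : X → X} {s : Set X} (hf : Bijective f)
    (h : EqOn f id sᶜ) : f '' s = s := by
  rw [← compl_inj_iff, ← image_compl_eq hf, h.image_eq, image_id]

lemma bijective_sub_of_lipschitzWith {E : Type*} [NormedAddCommGroup E] [CompleteSpace E]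
    {g : E → E} {K : ℝ≥0} (hK : K < 1) (hg : LipschitzWith K g) :
    Bijective fun x => x - g x := by
  refine (bijective_iff_existsUnique _).2 fun y => ?_
  have hcontr : ContractingWith K fun x => y + g x :=
    ⟨hK, LipschitzWith.of_dist_le_mul fun a b => by
      simpa only [dist_add_left] using hg.dist_le_mul a b⟩
  have isFixedPt_iff (x : E) : x - g x = y ↔ IsFixedPt (fun x => y + g x) x := by
    rw [IsFixedPt, sub_eq_iff_eq_add, eq_comm]
  simp only [isFixedPt_iff]
  exact ⟨_, hcontr.fixedPoint_isFixedPt, fun x hx => hcontr.fixedPoint_unique hx⟩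

variable {E F : Type*} [NormedAddCommGroup E] [NormedSpace ℝ E] [NormedAddCommGroup F]
  [NormedSpace ℝ F]

lemma eventually_forall_det_one_sub_smul_pos {X : Type*} [TopologicalSpace X] {s : Set X}
    (hs : IsCompact s) {A : X → E →L[ℝ] E} (hA : Continuous A) :
    ∀ᶠ t : ℝ in 𝓝 0, ∀ x ∈ s, 0 < (1 - t • A x).det := by
  refine hs.eventually_forall_of_forall_eventually fun x _ => ?_
  have hcont : Continuous fun z : ℝ × X => (1 - z.1 • A z.2).det :=
    ContinuousLinearMap.continuous_det.comp (by fun_prop)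
  refine hcont.continuousAt.eventually (lt_mem_nhds ?_)
  simp [ContinuousLinearMap.det]

lemma eventually_setIntegral_det_smul_comp_eq [FiniteDimensional ℝ E] [MeasurableSpace E]
    [BorelSpace E] (μ : Measure E) [μ.IsAddHaarMeasure] {k : E → E} (hk : ContDiff ℝ 1 k)
    (hsupp : HasCompactSupport k) (φ : E → F) :
    ∀ᶠ t : ℝ in 𝓝 0, ∫ x in tsupport k, (1 - t • fderiv ℝ k x).det • φ (x - t • k x) ∂μ =
      ∫ x in tsupport k, φ x ∂μ := by
  obtain ⟨C, hC⟩ := hk.lipschitzWith_of_hasCompactSupport hsupp one_ne_zero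
  have hmeas : MeasurableSet (tsupport k) := (isClosed_tsupport k).measurableSet
  have hcontr : ∀ᶠ t : ℝ in 𝓝 0, ‖t‖₊ * C < 1 :=
    (by fun_prop : Continuous fun t : ℝ => ‖t‖₊ * C).continuousAt.eventually
      (gt_mem_nhds (by simp))
  filter_upwards [hcontr, eventually_forall_det_one_sub_smul_pos hsupp
    (hk.continuous_fderiv one_ne_zero)] with t ht hdet
  have hbij : Bijective fun x => x - t • k x :=
    bijective_sub_of_lipschitzWith ht ((lipschitzWith_smul t).comp hC)
  have himage : (fun x => x - t • k x) '' tsupport k = tsupport k :=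
    image_eq_of_bijective_of_eqOn_compl hbij fun x hx => by
      simp [image_eq_zero_of_notMem_tsupport hx]
  have hderiv (x : E) : HasFDerivAt (fun x => x - t • k x) (1 - t • fderiv ℝ k x) x :=
    (hasFDerivAt_id x).sub ((hk.differentiable one_ne_zero x).hasFDerivAt.const_smul t)
  conv_rhs => rw [← himage, integral_image_eq_integral_abs_det_fderiv_smul μ hmeas
    (fun x _ => (hderiv x).hasFDerivWithinAt) hbij.injective.injOn φ]
  exact setIntegral_congr_fun hmeas fun x hx => by simp only [abs_of_pos (hdet x hx)]

end ChangeOfVariables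

section Brouwer

open MeasureTheory Function Module
open scoped Polynomial Topology

section InnerProductSpace

variable {F : Type*} [NormedAddCommGroup F] [InnerProductSpace ℝ F] [FiniteDimensional ℝ F]

lemma exists_polynomial_eval_eq_det_mul_eval_norm_sq (A : F →L[ℝ] F) (p : ℝ[X]) (x y : F) :
    ∃ q : ℝ[X], q.natDegree ≤ finrank ℝ F + p.natDegree * 2 ∧
      ∀ t, q.eval t = (1 - t • A).det * p.eval (‖x - t • y‖ ^ 2) := by
  obtain ⟨d, hd_natDegree, hd⟩ := exists_polynomial_eval_eq_det_one_sub_smul (A : End ℝ F)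
  let r : ℝ[X] := .C (‖y‖ ^ 2) * .X ^ 2 + .C (-2 * inner ℝ x y) * .X + .C (‖x‖ ^ 2)
  have eval_r (t : ℝ) : r.eval t = ‖x - t • y‖ ^ 2 := by
    rw [norm_sub_sq_real]
    simp [r, norm_smul, inner_smul_right, mul_pow]
    ring
  refine ⟨d * p.comp r, Polynomial.natDegree_mul_le_of_le hd_natDegree ?_, fun t => ?_⟩
  · grw [Polynomial.natDegree_comp, Polynomial.natDegree_quadratic_le]
  · rw [Polynomial.eval_mul, Polynomial.eval_comp, hd, eval_r]
    rfl

variable [MeasurableSpace F] [BorelSpace F] (μ : Measure F) [μ.IsAddHaarMeasure] {k : F → F}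

lemma setIntegral_det_mul_eval_norm_sq_eq (hk : ContDiff ℝ 1 k) (hsupp : HasCompactSupport k)
    (p : ℝ[X]) :
    ∫ x in tsupport k, (1 - fderiv ℝ k x).det * p.eval (‖x - k x‖ ^ 2) ∂μ =
      ∫ x in tsupport k, p.eval (‖x‖ ^ 2) ∂μ := by
  have := hk.continuous_fderiv one_ne_zero
  choose q hq_natDegree hq using fun x =>
    exists_polynomial_eval_eq_det_mul_eval_norm_sq (fderiv ℝ k x) p x (k x)
  have hint (t : ℝ) : IntegrableOn (fun x => (q x).eval t) (tsupport k) μ := by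
    simp only [hq]
    exact ((ContinuousLinearMap.continuous_det.comp (by fun_prop)).mul (by fun_prop)).continuousOn
      |>.integrableOn_compact hsupp
  obtain ⟨Q, hQ⟩ := exists_polynomial_eval_eq_integral_eval hq_natDegree hint
  have hQ_const : Q = .C (∫ x in tsupport k, p.eval (‖x‖ ^ 2) ∂μ) := by
    refine Polynomial.eq_of_infinite_eval_eq _ _ (infinite_of_mem_nhds 0 ?_)
    filter_upwards [eventually_setIntegral_det_smul_comp_eq μ hk hsupp
      fun x => p.eval (‖x‖ ^ 2)] with t ht
    simpa [hQ, hq] using ht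
  simpa [hq, hQ_const] using (hQ 1).symm

lemma setIntegral_det_mul_comp_norm_sq_eq (hk : ContDiff ℝ 1 k) (hsupp : HasCompactSupport k)
    {g : ℝ → ℝ} (hg : Continuous g) :
    ∫ x in tsupport k, (1 - fderiv ℝ k x).det * g (‖x - k x‖ ^ 2) ∂μ =
      ∫ x in tsupport k, g (‖x‖ ^ 2) ∂μ := by
  have := hk.continuous_fderiv one_ne_zero
  have hmeas : MeasurableSet (tsupport k) := (isClosed_tsupport k).measurableSet
  obtain ⟨b, hb⟩ := (IsCompact.image hsupp
    (by fun_prop : Continuous fun x => max (‖x - k x‖ ^ 2) (‖x‖ ^ 2))).bddAbove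
  replace hb (x : F) (hx : x ∈ tsupport k) := max_le_iff.1 (hb (mem_image_of_mem _ hx))
  have integrableOn {f : F → ℝ} (hf : Continuous f) : IntegrableOn f (tsupport k) μ :=
    hf.continuousOn.integrableOn_compact hsupp
  simpa using integral_mul_comp_eq_of_forall_polynomial (a := 0) (b := b) (w' := fun _ => 1)
    (ae_restrict_of_forall_mem hmeas fun x hx => ⟨sq_nonneg _, (hb x hx).1⟩)
    (ae_restrict_of_forall_mem hmeas fun x hx => ⟨sq_nonneg _, (hb x hx).2⟩)
    (fun g _ => integrableOn
      ((ContinuousLinearMap.continuous_det.comp (by fun_prop)).mul (by fun_prop)))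
    (fun g _ => integrableOn (by fun_prop))
    (by simpa using setIntegral_det_mul_eval_norm_sq_eq μ hk hsupp) hg

-- Otherwise `g (‖x - k x‖ ^ 2)` vanishes on the support of `k` for a bump function `g` at `0`.
lemma exists_isFixedPt_of_contDiff_of_innerProductSpace (hk : ContDiff ℝ 1 k)
    (hsupp : HasCompactSupport k) : ∃ x, IsFixedPt k x := by
  borelize F
  by_contra! hfix
  obtain ⟨δ, hδ, hδ_le⟩ := IsCompact.exists_forall_le' hsupp (a := 0)
    (by fun_prop : Continuous fun x => ‖x - k x‖ ^ 2).continuousOn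
    fun x _ => by have := sub_ne_zero.2 (Ne.symm (hfix x)); positivity
  have hzero_mem : tsupport k ∈ 𝓝 0 :=
    mem_of_superset (hk.continuous.isOpen_support.mem_nhds (hfix 0)) (subset_tsupport k)
  let g : ℝ → ℝ := fun s => max 0 (δ - s)
  have hg : Continuous g := by fun_prop
  have integral_eq_zero : ∫ x in tsupport k, g (‖x‖ ^ 2) = 0 := by
    rw [← setIntegral_det_mul_comp_norm_sq_eq volume hk hsupp hg]
    exact setIntegral_eq_zero_of_forall_eq_zero fun x hx => by simp [g, hδ_le x hx]
  refine integral_eq_zero.not_gt ?_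
  have hcont : Continuous fun x : F => g (‖x‖ ^ 2) := by fun_prop
  refine (setIntegral_pos_iff_support_of_nonneg_ae (.of_forall fun x => le_max_left _ _)
    (hcont.continuousOn.integrableOn_compact hsupp)).2
    (Measure.measure_pos_of_mem_nhds _ (inter_mem ?_ hzero_mem))
  exact hcont.isOpen_support.mem_nhds (by simp [g, hδ.not_ge])

end InnerProductSpace

variable {E : Type*} [NormedAddCommGroup E] [NormedSpace ℝ E] [FiniteDimensional ℝ E]

lemma exists_isFixedPt_of_contDiff {k : E → E} (hk : ContDiff ℝ 1 k)
    (hsupp : HasCompactSupport k) : ∃ x, IsFixedPt k x := by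
  let T : E ≃L[ℝ] EuclideanSpace ℝ (Fin (finrank ℝ E)) := toEuclidean
  obtain ⟨x, hx⟩ := exists_isFixedPt_of_contDiff_of_innerProductSpace
    (T.contDiff.comp (hk.comp T.symm.contDiff))
    ((hsupp.comp_homeomorph T.symm.toHomeomorph).comp_left T.map_zero)
  exact ⟨T.symm x, T.injective (by simpa [IsFixedPt] using hx)⟩

lemma exists_isFixedPt_of_hasCompactSupport {f : E → E} (hf : Continuous f)
    (hsupp : HasCompactSupport f) : ∃ x, IsFixedPt f x := by
  by_contra! hfix
  obtain ⟨δ, hδ, hδ_le⟩ := (IsCompact.insert hsupp 0).exists_forall_le' (a := 0)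
    (by fun_prop : Continuous fun x => dist x (f x)).continuousOn
    fun x _ => dist_pos.2 (Ne.symm (hfix x))
  obtain ⟨g, hg, hgf, hg_supp⟩ := hf.exists_contDiff_approx 1 continuous_const fun _ => hδ
  obtain ⟨x, hx⟩ := exists_isFixedPt_of_contDiff hg (hsupp.mono hg_supp)
  have x_mem : x ∈ insert 0 (tsupport f) := by
    rcases eq_or_ne x 0 with rfl | hx0
    · exact mem_insert _ _
    · exact mem_insert_of_mem _ (subset_tsupport f (hg_supp (by rwa [mem_support, hx.eq])))
  exact (hδ_le x x_mem).not_gt (by simpa only [hx.eq] using hgf x)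

universe u

lemma exists_isFixedPt_of_isCompact {E : Type u} [NormedAddCommGroup E] [NormedSpace ℝ E]
    [FiniteDimensional ℝ E] {K : Set E} [TietzeExtension.{u} K] (hK : IsCompact K) (f : C(K, K)) :
    ∃ x, IsFixedPt f x := by
  obtain ⟨g, rfl⟩ := ContinuousMap.exists_restrict_eq hK.isClosed f
  obtain ⟨r, hr⟩ := hK.isBounded.exists_norm_le
  obtain ⟨χ, hχ_one, hχ_supp, -, hχ⟩ := exists_continuousMap_one_of_isCompact_subset_isOpen
    (isCompact_closedBall (0 : E) r) isOpen_univ (subset_univ _)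
  obtain ⟨x, hx⟩ := exists_isFixedPt_of_hasCompactSupport (f := fun x => χ x • (g x : E))
    (by fun_prop) (HasCompactSupport.smul_right hχ_supp)
  have norm_x_le : ‖x‖ ≤ r := calc
    ‖x‖ = |χ x| * ‖(g x : E)‖ := by rw [← Real.norm_eq_abs, ← norm_smul, hx.eq]
    _ ≤ 1 * ‖(g x : E)‖ := by gcongr; exact abs_le.2 ⟨by linarith [(hχ x).1], (hχ x).2⟩
    _ ≤ r := by rw [one_mul]; exact hr _ (g x).2
  have g_x : (g x : E) = x := by
    have hχ_x : χ x = 1 := hχ_one (mem_closedBall_zero_iff.2 norm_x_le)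
    simpa only [hχ_x, one_smul] using hx.eq
  exact ⟨⟨x, g_x ▸ (g x).2⟩, Subtype.ext g_x⟩

end Brouwer

section Ekeland

open scoped Topology

variable {X : Type*} [MetricSpace X] {J : X → ℝ} {ε : ℝ} {x y : X}

/-- The set of points lying below `x` in the Ekeland order
`y ≼ x ↔ J y + ε * dist y x ≤ J x` associated with the functional `J` and the slope `ε`. -/
def ekelandCone (J : X → ℝ) (ε : ℝ) (x : X) : Set X :=
  {y | J y + ε * dist y x ≤ J x}

lemma self_mem_ekelandCone : x ∈ ekelandCone J ε x := by
  simp [ekelandCone]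

lemma ekelandCone_subset (hε : 0 ≤ ε) (hy : y ∈ ekelandCone J ε x) :
    ekelandCone J ε y ⊆ ekelandCone J ε x := fun z hz => calc
  J z + ε * dist z x ≤ J z + ε * dist z y + ε * dist y x := by
    grw [dist_triangle z y x]; exact (by ring : _ = _).le
  _ ≤ J y + ε * dist y x := by gcongr; exact hz
  _ ≤ J x := hy

lemma isClosed_ekelandCone (hJ : LowerSemicontinuous J) : IsClosed (ekelandCone J ε x) :=
  (hJ.add (by fun_prop : Continuous fun y => ε * dist y x).lowerSemicontinuous).isClosed_preimage _

lemma exists_mem_ekelandCone_subset_closedBall (hε : 0 < ε) (hJ : BddBelow (range J)) (x : X)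
    {r : ℝ} (hr : 0 < r) :
    ∃ y ∈ ekelandCone J ε x, ekelandCone J ε y ⊆ Metric.closedBall y r := by
  obtain ⟨_, ⟨y, hy, rfl⟩, hy_lt⟩ := Real.lt_sInf_add_pos
    (⟨J x, x, self_mem_ekelandCone, rfl⟩ : (J '' ekelandCone J ε x).Nonempty) (mul_pos hε hr)
  refine ⟨y, hy, fun z hz => ?_⟩
  have sInf_le : sInf (J '' ekelandCone J ε x) ≤ J z :=
    csInf_le (hJ.mono (image_subset_range _ _))
      (mem_image_of_mem J (ekelandCone_subset hε.le hy hz))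
  have hz : J z + ε * dist z y ≤ J y := hz
  exact le_of_mul_le_mul_left (by linarith) hε

theorem exists_mem_ekelandCone_eq_singleton [CompleteSpace X] (hε : 0 < ε)
    (hJ : LowerSemicontinuous J) (hbdd : BddBelow (range J)) (x₀ : X) :
    ∃ x ∈ ekelandCone J ε x₀, ekelandCone J ε x = {x} := by
  choose! next next_mem next_subset using
    fun x (r : ℝ) => exists_mem_ekelandCone_subset_closedBall hε hbdd x (r := r)
  let x : ℕ → X := Nat.rec x₀ fun n y => next y (1 / ((n : ℝ) + 1))
  have anti : Antitone fun n => ekelandCone J ε (x n) :=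
    antitone_nat_of_succ_le fun n => ekelandCone_subset hε.le (next_mem _ _ Nat.one_div_pos_of_nat)
  have dist_le {n : ℕ} {z : X} (hz : z ∈ ekelandCone J ε (x (n + 1))) :
      dist (x (n + 1)) z ≤ 1 / ((n : ℝ) + 1) := by
    rw [dist_comm]
    exact next_subset _ _ Nat.one_div_pos_of_nat hz
  obtain ⟨a, ha⟩ := cauchySeq_tendsto_of_complete <| cauchySeq_of_le_tendsto_0' _
    (fun n m hnm => dist_le (anti (Nat.succ_le_succ hnm) self_mem_ekelandCone))
    tendsto_one_div_add_atTop_nhds_zero_nat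
  have a_mem (n : ℕ) : a ∈ ekelandCone J ε (x n) :=
    (isClosed_ekelandCone hJ).mem_of_tendsto ha <|
      (eventually_ge_atTop n).mono fun m hm => anti (hm.trans m.le_succ) self_mem_ekelandCone
  refine ⟨a, a_mem 0, eq_singleton_iff_unique_mem.2 ⟨self_mem_ekelandCone, fun y hy => ?_⟩⟩
  have hy : Tendsto (fun n => x (n + 1)) atTop (𝓝 y) :=
    tendsto_iff_dist_tendsto_zero.2 <| squeeze_zero (fun _ => dist_nonneg)
      (fun n => dist_le (ekelandCone_subset hε.le (a_mem (n + 1)) hy))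
      tendsto_one_div_add_atTop_nhds_zero_nat
  exact tendsto_nhds_unique hy ha

lemma exists_mem_ball_forall_lt_add_dist [CompleteSpace X] {α r : ℝ} (hε : 0 < ε) (hr : 0 ≤ r)
    (hJ : LowerSemicontinuous J) (x₀ : X) (hα : ∀ y ∈ Metric.closedBall x₀ r, α ≤ J y)
    (hlt : J x₀ - α < ε * r) :
    ∃ x ∈ Metric.ball x₀ r, J x ≤ J x₀ ∧
      ∀ y ∈ Metric.closedBall x₀ r, y ≠ x → J x < J y + ε * dist y x := by
  have : CompleteSpace (Metric.closedBall x₀ r) := Metric.isClosed_closedBall.completeSpace_coe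
  obtain ⟨⟨x, hx⟩, hx_le, hx_min⟩ := exists_mem_ekelandCone_eq_singleton hε
    (hJ.comp (continuous_subtype_val (p := (· ∈ Metric.closedBall x₀ r))))
    ⟨α, forall_mem_range.2 fun y => hα y y.2⟩ ⟨x₀, Metric.mem_closedBall_self hr⟩
  have hx_le : J x + ε * dist x x₀ ≤ J x₀ := hx_le
  have mul_dist_nonneg : 0 ≤ ε * dist x x₀ := by positivity
  refine ⟨x, lt_of_mul_lt_mul_left (by linarith [hα x hx]) hε.le, by linarith, fun y hy hne => ?_⟩
  by_contra! hle
  have : (⟨y, hy⟩ : Metric.closedBall x₀ r) ∈ ({⟨x, hx⟩} : Set _) := hx_min ▸ hle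
  exact hne (congrArg Subtype.val this)

end Ekeland

section Minimax

open Asymptotics
open scoped Topology

variable {V : Type*} [NormedAddCommGroup V] [NormedSpace ℝ V] {Φ : V → ℝ} {Φ' : V → V →L[ℝ] ℝ}
  {α β ε : ℝ}

lemma exists_norm_le_one_apply_lt_neg {f : V →L[ℝ] ℝ} (hf : ε < ‖f‖) :
    ∃ v, ‖v‖ ≤ 1 ∧ f v < -ε := by
  obtain ⟨v, hv, hfv⟩ := f.exists_lt_apply_of_lt_opNorm hf
  rcases lt_abs.1 hfv with h | h
  · exact ⟨-v, by rw [norm_neg]; exact hv.le, by rw [map_neg]; exact neg_lt_neg h⟩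
  · exact ⟨v, hv.le, lt_neg_of_lt_neg h⟩

lemma exists_continuousMap_norm_le_one_apply_lt_neg {D : Type*} [TopologicalSpace D]
    [NormalSpace D] [ParacompactSpace D] {g : D → V →L[ℝ] ℝ} (hg : Continuous g) {A : Set D}
    (hA : IsClosed A) (hε : ∀ w ∈ A, ε < ‖g w‖) :
    ∃ v : C(D, V), (∀ w, ‖v w‖ ≤ 1) ∧ ∀ w ∈ A, g w (v w) < -ε := by
  let t (w : D) : Set V := Metric.closedBall 0 1 ∩ {v | w ∈ A → g w v < -ε}
  have convex_t (w : D) : Convex ℝ (t w) := (convex_closedBall 0 1).inter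
    (convex_halfSpace_lt (g w).isLinear (-ε)).setOfPred_const_imp
  have local_const (w : D) : ∃ v, ∀ᶠ y in 𝓝 w, v ∈ t y := by
    by_cases hw : w ∈ A
    · obtain ⟨v, hv, hgv⟩ := exists_norm_le_one_apply_lt_neg (hε w hw)
      refine ⟨v, ?_⟩
      filter_upwards [(by fun_prop : Continuous fun y => g y v).continuousAt.eventually
        (gt_mem_nhds hgv)] with y hy
      exact ⟨mem_closedBall_zero_iff.2 hv, fun _ => hy⟩
    · refine ⟨0, ?_⟩
      filter_upwards [hA.isOpen_compl.mem_nhds hw] with y hy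
      exact ⟨Metric.mem_closedBall_self zero_le_one, fun hyA => absurd hyA hy⟩
  obtain ⟨v, hv⟩ := exists_continuous_forall_mem_convex_of_local_const convex_t local_const
  exact ⟨v, fun w => mem_closedBall_zero_iff.1 (hv w).1, fun w => (hv w).2⟩

lemma eventually_apply_add_smul_lt_sub_mul {f' : V →L[ℝ] ℝ} {x v : V}
    (hΦ : HasStrictFDerivAt Φ f' x) (hv : f' v < -ε) :
    ∀ᶠ z : ℝ × V × V in 𝓝 (0, x, v),
      0 < z.1 → Φ (z.2.1 + z.1 • z.2.2) < Φ z.2.1 - ε * z.1 := by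
  let η := (-ε - f' v) / 2
  have hη : 0 < η := half_pos (sub_pos.2 hv)
  have hlim : Tendsto (fun z : ℝ × V × V => (z.2.1 + z.1 • z.2.2, z.2.1)) (𝓝 (0, x, v))
      (𝓝 (x, x)) := Continuous.tendsto' (by fun_prop) _ _ (by simp)
  have hbig : (fun z : ℝ × V × V => z.1 • z.2.2) =O[𝓝 (0, x, v)] fun z => z.1 := by
    simpa using (isBigO_refl (fun z : ℝ × V × V => z.1) (𝓝 (0, x, v))).smul
      ((by fun_prop : Continuous fun z : ℝ × V × V => z.2.2).continuousAt.isBigO_one ℝ)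
  have hlittle : (fun z : ℝ × V × V => Φ (z.2.1 + z.1 • z.2.2) - Φ z.2.1 - z.1 * f' z.2.2)
      =o[𝓝 (0, x, v)] fun z => z.1 := by
    refine IsLittleO.trans_isBigO ?_ hbig
    simpa [Function.comp_def] using hΦ.isLittleO.comp_tendsto hlim
  have hf' : ∀ᶠ z : ℝ × V × V in 𝓝 (0, x, v), f' z.2.2 < f' v + η :=
    (by fun_prop : Continuous fun z : ℝ × V × V => f' z.2.2).continuousAt.eventually
      (gt_mem_nhds (lt_add_of_pos_right _ hη))
  filter_upwards [hlittle.def hη, hf'] with z hz hz' hz_pos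
  rw [Real.norm_of_nonneg hz_pos.le] at hz
  calc Φ (z.2.1 + z.1 • z.2.2) ≤ Φ z.2.1 + z.1 * f' z.2.2 + η * z.1 := by
        linarith [(abs_le.1 hz).2]
    _ < Φ z.2.1 + z.1 * (f' v + η) + η * z.1 := by gcongr
    _ = Φ z.2.1 - ε * z.1 := by simp only [η]; ring

lemma eventually_forall_apply_add_smul_lt_sub_mul {D : Type*} [TopologicalSpace D]
    [CompactSpace D] (hΦ : ∀ x, HasStrictFDerivAt Φ (Φ' x) x) {h v : C(D, V)} {m : ℝ}
    (hm : ∀ w, Φ (h w) ≤ m) (hv : ∀ w, Φ (h w) = m → Φ' (h w) (v w) < -ε) :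
    ∀ᶠ τ : ℝ in 𝓝[>] 0, ∀ w, Φ (h w + τ • v w) < m - ε * τ := by
  have hΦ_cont : Continuous Φ := continuous_iff_continuousAt.2 fun x => (hΦ x).continuousAt
  rw [eventually_nhdsWithin_iff]
  suffices ∀ᶠ τ : ℝ in 𝓝 0, ∀ w ∈ univ, 0 < τ → Φ (h w + τ • v w) < m - ε * τ from
    this.mono fun τ hτ hτ_pos w => hτ w (mem_univ w) hτ_pos
  refine isCompact_univ.eventually_forall_of_forall_eventually fun w _ => ?_
  rcases (hm w).eq_or_lt with hw | hw
  · have hlim : Tendsto (fun z : ℝ × D => (z.1, h z.2, v z.2)) (𝓝 (0, w)) (𝓝 (0, h w, v w)) :=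
      Continuous.tendsto (by fun_prop) (0, w)
    filter_upwards [hlim.eventually (eventually_apply_add_smul_lt_sub_mul (hΦ _) (hv w hw))]
      with z hz hz_pos
    exact (hz hz_pos).trans_le (sub_le_sub_right (hm z.2) _)
  · have hcont : Continuous fun z : ℝ × D => m - ε * z.1 - Φ (h z.2 + z.1 • v z.2) := by fun_prop
    filter_upwards [hcont.continuousAt.eventually (lt_mem_nhds (a := 0) (by simpa using hw))]
      with z hz _
    exact sub_pos.1 hz

variable {D : Type*} [TopologicalSpace D] [CompactSpace D]

lemma lowerSemicontinuous_iSup_apply {X : Type*} [TopologicalSpace X] {f : X → ℝ}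
    (hf : Continuous f) : LowerSemicontinuous fun h : C(D, X) => ⨆ w, f (h w) :=
  lowerSemicontinuous_ciSup (fun h => (isCompact_range (by fun_prop)).bddAbove)
    fun w => (by fun_prop : Continuous fun h : C(D, X) => f (h w)).lowerSemicontinuous

lemma exists_norm_le_one_eventually_iSup_add_smul_lt [T2Space D] [Nonempty D]
    (hΦ : ∀ x, HasStrictFDerivAt Φ (Φ' x) x) (hΦ' : Continuous Φ') (h : C(D, V))
    (hε : ∀ w, Φ (h w) = ⨆ y, Φ (h y) → ε < ‖Φ' (h w)‖) :
    ∃ v : C(D, V), ‖v‖ ≤ 1 ∧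
      ∀ᶠ τ : ℝ in 𝓝[>] 0, ⨆ w, Φ ((h + τ • v) w) < (⨆ w, Φ (h w)) - ε * τ := by
  have hΦ_cont : Continuous Φ := continuous_iff_continuousAt.2 fun x => (hΦ x).continuousAt
  obtain ⟨v, hv_norm, hv⟩ := exists_continuousMap_norm_le_one_apply_lt_neg
    (hΦ'.comp h.continuous) (isClosed_eq (by fun_prop) continuous_const) hε
  refine ⟨v, (ContinuousMap.norm_le v zero_le_one).2 hv_norm, ?_⟩
  filter_upwards [eventually_forall_apply_add_smul_lt_sub_mul hΦ
    (le_ciSup (isCompact_range (by fun_prop)).bddAbove) hv] with τ hτ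
  obtain ⟨w, hw⟩ := (isCompact_range
    (by fun_prop : Continuous fun w => Φ ((h + τ • v) w))).sSup_mem (range_nonempty _)
  exact hw.symm.trans_lt (hτ w)

lemma exists_apply_mem_Icc_norm_fderiv_le [CompleteSpace V] [T2Space D]
    (hΦ : ∀ x, HasStrictFDerivAt Φ (Φ' x) x) (hΦ' : Continuous Φ') {i : C(D, V)} {C : ℝ}
    (hε : 0 < ε) (hC : 0 ≤ C) (hlink : ∀ h ∈ Metric.closedBall i C, ∃ w, α ≤ Φ (h w))
    (hβ : ∀ w, Φ (i w) ≤ β) (hlt : β - α < ε * C) :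
    ∃ u, Φ u ∈ Icc α β ∧ ‖Φ' u‖ ≤ ε := by
  have hΦ_cont : Continuous Φ := continuous_iff_continuousAt.2 fun x => (hΦ x).continuousAt
  have : Nonempty D := let ⟨w, _⟩ := hlink i (Metric.mem_closedBall_self hC); ⟨w⟩
  have le_iSup (h : C(D, V)) (w : D) : Φ (h w) ≤ ⨆ w, Φ (h w) :=
    le_ciSup (isCompact_range (by fun_prop : Continuous fun w => Φ (h w))).bddAbove w
  have iSup_le : ⨆ w, Φ (i w) ≤ β := ciSup_le hβ
  have le_iSup_of_mem (h) (hh : h ∈ Metric.closedBall i C) : α ≤ ⨆ w, Φ (h w) :=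
    let ⟨w, hw⟩ := hlink h hh; hw.trans (le_iSup h w)
  obtain ⟨h, hh, hh_le, hh_min⟩ := exists_mem_ball_forall_lt_add_dist hε hC
    (lowerSemicontinuous_iSup_apply hΦ_cont) i le_iSup_of_mem (by linarith)
  by_contra! hlarge
  obtain ⟨v, hv_norm, hv⟩ := exists_norm_le_one_eventually_iSup_add_smul_lt hΦ hΦ' h fun w hw =>
    hlarge _ (hw ▸ ⟨le_iSup_of_mem h (Metric.ball_subset_closedBall hh), hh_le.trans iSup_le⟩)
  have hmem : ∀ᶠ τ : ℝ in 𝓝[>] 0, h + τ • v ∈ Metric.ball i C :=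
    (Continuous.tendsto' (by fun_prop) 0 h (by simp)).eventually (Metric.isOpen_ball.mem_nhds hh)
      |>.filter_mono nhdsWithin_le_nhds
  obtain ⟨τ, hτ, hτ_mem, hτ_pos⟩ := (hv.and (hmem.and self_mem_nhdsWithin)).exists
  have hdist : dist (h + τ • v) h ≤ τ := by
    rw [dist_self_add_left, norm_smul, Real.norm_of_nonneg (le_of_lt hτ_pos)]
    exact mul_le_of_le_one_right (le_of_lt hτ_pos) hv_norm
  have hne : h + τ • v ≠ h := by
    intro heq
    rw [heq] at hτ
    linarith [mul_pos hε hτ_pos]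
  have := hh_min _ (Metric.ball_subset_closedBall hτ_mem) hne
  linarith [mul_le_mul_of_nonneg_left hdist hε.le]

/-- The local Palais–Smale condition `(P.S.)_c` for a functional `Φ` with derivative `Φ'`; the
derivative is an explicit argument, and the condition does not itself assert differentiability. -/
def PalaisSmaleAt (Φ : V → ℝ) (Φ' : V → V →L[ℝ] ℝ) (c : ℝ) : Prop :=
  ∀ u : ℕ → V, Tendsto (fun n => Φ (u n)) atTop (𝓝 c) →
    Tendsto (fun n => ‖Φ' (u n)‖) atTop (𝓝 0) →
    ∃ φ : ℕ → ℕ, StrictMono φ ∧ ∃ v : V, Tendsto (u ∘ φ) atTop (𝓝 v)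

lemma exists_fderiv_eq_zero_of_palaisSmaleAt (hΦ : Continuous Φ) (hΦ' : Continuous Φ')
    (hPS : ∀ c ∈ Icc α β, PalaisSmaleAt Φ Φ' c)
    (happrox : ∀ ε > 0, ∃ u, Φ u ∈ Icc α β ∧ ‖Φ' u‖ ≤ ε) :
    ∃ u, Φ' u = 0 ∧ Φ u ∈ Icc α β := by
  choose u hu_mem hu_norm using fun n : ℕ => happrox (1 / ((n : ℝ) + 1)) Nat.one_div_pos_of_nat
  have hu_lim : Tendsto (fun n => ‖Φ' (u n)‖) atTop (𝓝 0) :=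
    squeeze_zero (fun _ => norm_nonneg _) hu_norm tendsto_one_div_add_atTop_nhds_zero_nat
  obtain ⟨c, hc, ψ, hψ, hψ_lim⟩ := isCompact_Icc.tendsto_subseq hu_mem
  obtain ⟨φ, hφ, v, hv⟩ := hPS c hc (u ∘ ψ) hψ_lim (hu_lim.comp hψ.tendsto_atTop)
  have hΦ'v : Tendsto (fun n => ‖Φ' (u (ψ (φ n)))‖) atTop (𝓝 ‖Φ' v‖) :=
    (hΦ'.norm.tendsto v).comp hv
  refine ⟨v, norm_eq_zero.1 (tendsto_nhds_unique hΦ'v ?_),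
    isClosed_Icc.mem_of_tendsto ((hΦ.tendsto v).comp hv) (.of_forall fun n => hu_mem _)⟩
  exact hu_lim.comp (hψ.comp hφ).tendsto_atTop

end Minimax

section Linking

lemma exists_eq_zero_of_norm_sub_le {E : Type*} [NormedAddCommGroup E] [NormedSpace ℝ E]
    [FiniteDimensional ℝ E] {M : ℝ} (hM : 0 < M) {f : Metric.closedBall (0 : E) M → E}
    (hf : Continuous f) (hle : ∀ x, ‖x - f x‖ ≤ M) : ∃ x, f x = 0 := by
  have := Metric.instTietzeExtensionClosedBall ℝ (0 : E) hM
  let k : C(Metric.closedBall (0 : E) M, Metric.closedBall (0 : E) M) :=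
    ⟨fun x => ⟨x - f x, mem_closedBall_zero_iff.2 (hle x)⟩, by fun_prop⟩
  obtain ⟨x, hx⟩ := exists_isFixedPt_of_isCompact (isCompact_closedBall 0 M) k
  exact ⟨x, sub_eq_self.1 (congrArg Subtype.val hx)⟩

variable {V : Type*} [NormedAddCommGroup V] [NormedSpace ℝ V]

/-- Silva's set `S_ρ = closure (V₁ \ B(0,ρ)) ∪ ((ℝ⁺e ⊕ V₁) ∩ ∂B(0,ρ))`, which links with the
finite-dimensional complements of `V₁` that contain `e`. -/
def linkingSet (V₁ : Submodule ℝ V) (e : V) (ρ : ℝ) : Set V :=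
  closure (V₁ \ Metric.ball 0 ρ) ∪
    ({x | ∃ s : ℝ, 0 ≤ s ∧ ∃ v ∈ V₁, x = s • e + v} ∩ Metric.sphere 0 ρ)

lemma mem_linkingSet_of_min_eq_zero {V₁ : Submodule ℝ V} {e v : V} {s c ρ : ℝ} (hc : 0 < c)
    (hv : v - s • e ∈ V₁) (hmin : min s (c * (‖v‖ - ρ)) = 0) : v ∈ linkingSet V₁ e ρ := by
  have hs : 0 ≤ s := hmin ▸ min_le_left _ _
  have hρ : 0 ≤ ‖v‖ - ρ := nonneg_of_mul_nonneg_right (hmin ▸ min_le_right _ _) hc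
  rcases min_choice s (c * (‖v‖ - ρ)) with h | h <;> rw [hmin] at h
  · rw [← h, zero_smul, sub_zero] at hv
    exact .inl (subset_closure ⟨hv, by simpa using hρ⟩)
  · have norm_v : ‖v‖ - ρ = 0 := (mul_eq_zero.1 h.symm).resolve_left hc.ne'
    exact .inr ⟨⟨s, hs, v - s • e, hv, by abel⟩,
      mem_sphere_zero_iff_norm.2 (sub_eq_zero.1 norm_v)⟩

lemma abs_apply_sub_min_le (σ : V →L[ℝ] ℝ) (v : V) (ρ : ℝ) :
    |σ v - min (σ v) (‖σ‖ * (‖v‖ - ρ))| ≤ ‖σ‖ * |ρ| := by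
  rw [abs_of_nonneg (sub_nonneg.2 (min_le_left _ _)), sub_le_comm, le_min_iff]
  refine ⟨sub_le_self _ (by positivity), ?_⟩
  calc σ v - ‖σ‖ * |ρ| ≤ ‖σ‖ * ‖v‖ - ‖σ‖ * ρ := by
        gcongr
        exacts [(le_abs_self _).trans (σ.le_opNorm v), le_abs_self ρ]
    _ = ‖σ‖ * (‖v‖ - ρ) := (mul_sub _ _ _).symm

lemma exists_forall_exists_mem_linkingSet_ker {W : Submodule ℝ V} [FiniteDimensional ℝ W]
    {P : V →L[ℝ] W} (hP : ∀ w : W, P w = w) {e : W} (he : e ≠ 0) (ρ : ℝ) {C : ℝ} (hC : 0 ≤ C) :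
    ∃ M, ∀ h : C(Metric.closedBall (0 : W) M, V), (∀ w, ‖h w - (w : W)‖ ≤ C) →
      ∃ w, h w ∈ linkingSet (P : V →ₗ[ℝ] W).ker e ρ := by
  obtain ⟨f, hfe⟩ := SeparatingDual.exists_eq_one (R := ℝ) he
  let σ : V →L[ℝ] ℝ := f ∘L P
  have σ_e : σ e = 1 := by simp [σ, hP, hfe]
  have σ_pos : 0 < ‖σ‖ := norm_pos_iff.2 (by rintro h; simp [h] at σ_e)
  let M : ℝ := ‖P‖ * C + ‖σ‖ * |ρ| * ‖e‖ + 1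
  refine ⟨M, fun h hh => ?_⟩
  let τ (v : V) : ℝ := min (σ v) (‖σ‖ * (‖v‖ - ρ))
  have norm_sub_le_M (w : Metric.closedBall (0 : W) M) :
      ‖(w : W) - (P (h w) - (σ (h w) - τ (h w)) • e)‖ ≤ M := by
    calc ‖(w : W) - (P (h w) - (σ (h w) - τ (h w)) • e)‖
        = ‖(σ (h w) - τ (h w)) • e - P (h w - (w : W))‖ := by
          rw [map_sub, hP]; congr 1; abel
      _ ≤ |σ (h w) - τ (h w)| * ‖e‖ + ‖P‖ * ‖h w - (w : W)‖ := by
          grw [norm_sub_le, P.le_opNorm, norm_smul, Real.norm_eq_abs]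
      _ ≤ ‖σ‖ * |ρ| * ‖e‖ + ‖P‖ * C := by
          grw [abs_apply_sub_min_le, hh w]
      _ ≤ M := by linarith
  obtain ⟨w, hw⟩ :=
    exists_eq_zero_of_norm_sub_le (by positivity : 0 < M) (by fun_prop) norm_sub_le_M
  have hPw : P (h w) = (σ (h w) - τ (h w)) • e := sub_eq_zero.1 hw
  have σ_eq : σ (h w) = σ (h w) - τ (h w) := by
    calc σ (h w) = f ((σ (h w) - τ (h w)) • e) := congrArg f hPw
      _ = σ (h w) - τ (h w) := by rw [map_smul, hfe, smul_eq_mul, mul_one]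
  have τ_eq_zero : τ (h w) = 0 := by linarith
  have mem_ker : h w - σ (h w) • (e : V) ∈ (P : V →ₗ[ℝ] W).ker := by
    rw [← σ_eq] at hPw
    exact LinearMap.mem_ker.2 (by simp only [ContinuousLinearMap.coe_coe, map_sub, map_smul, hP,
      hPw, sub_self])
  exact ⟨w, mem_linkingSet_of_min_eq_zero σ_pos mem_ker τ_eq_zero⟩

lemma exists_forall_exists_mem_linkingSet {V₁ W : Submodule ℝ V} [FiniteDimensional ℝ W]
    (hV₁ : IsClosed (V₁ : Set V)) (hcompl : IsCompl V₁ W) {e : V} (heW : e ∈ W) (he : e ≠ 0)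
    (ρ : ℝ) {C : ℝ} (hC : 0 ≤ C) :
    ∃ M, ∀ h : C(Metric.closedBall (0 : W) M, V), (∀ w, ‖h w - (w : W)‖ ≤ C) →
      ∃ w, h w ∈ linkingSet V₁ e ρ := by
  have htop : W.IsTopCompl V₁ :=
    (Submodule.IsCompl.isTopCompl_of_isClosed_of_finiteDimensional hcompl hV₁).symm
  have hker : ((W.projectionOntoL V₁ htop : V →L[ℝ] W) : V →ₗ[ℝ] W).ker = V₁ :=
    Submodule.ker_projectionOnto hcompl.symm
  have := exists_forall_exists_mem_linkingSet_ker (P := W.projectionOntoL V₁ htop)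
    (Submodule.projectionOnto_apply_left hcompl.symm) (e := ⟨e, heW⟩)
    (by simpa using he) ρ hC
  rwa [hker] at this

end Linking

lemma isCompl_sup_of_isInternal {R M : Type*} [Ring R] [AddCommGroup M] [Module R M]
    {p q r : Submodule R M} (h : DirectSum.IsInternal ![p, q, r]) : IsCompl p (q ⊔ r) := by
  refine ⟨?_, ?_⟩
  · refine (h.submodule_iSupIndep 0).mono_right (sup_le ?_ ?_)
    · exact le_iSup₂_of_le (1 : Fin 3) (by decide) le_rfl
    · exact le_iSup₂_of_le (2 : Fin 3) (by decide) le_rfl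
  · rw [codisjoint_iff, ← h.submodule_iSup_eq_top, iSup_fin_three, sup_assoc]
    rfl

theorem silva_generalized_mountain_pass_general {V : Type*} [NormedAddCommGroup V]
    [NormedSpace ℝ V] [CompleteSpace V] {V₁ W : Submodule ℝ V} [FiniteDimensional ℝ W]
    (hV₁ : IsClosed (V₁ : Set V)) (hcompl : IsCompl V₁ W) {e : V} (heW : e ∈ W) (he : e ≠ 0)
    {Φ : V → ℝ} {Φ' : V → V →L[ℝ] ℝ} (hderiv : ∀ x, HasFDerivAt Φ (Φ' x) x)
    (hcont : Continuous Φ') {ρ α β : ℝ} (hα : ∀ u ∈ linkingSet V₁ e ρ, α ≤ Φ u)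
    (hβ : ∀ u ∈ W, Φ u ≤ β) (hPS : ∀ c ∈ Icc α β, PalaisSmaleAt Φ Φ' c) :
    ∃ u, Φ' u = 0 ∧ Φ u ∈ Icc α β := by
  have hΦ (x : V) : HasStrictFDerivAt Φ (Φ' x) x :=
    hasStrictFDerivAt_of_hasFDerivAt_of_continuousAt (.of_forall hderiv) hcont.continuousAt
  refine exists_fderiv_eq_zero_of_palaisSmaleAt
    (continuous_iff_continuousAt.2 fun x => (hderiv x).continuousAt) hcont hPS fun ε hε => ?_
  obtain ⟨C, hC, hlt⟩ : ∃ C ≥ 0, β - α < ε * C :=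
    ⟨(|β - α| + 1) / ε, by positivity, by
      rw [mul_div_cancel₀ _ hε.ne']; exact lt_add_of_le_of_pos (le_abs_self _) one_pos⟩
  obtain ⟨M, hM⟩ := exists_forall_exists_mem_linkingSet hV₁ hcompl heW he ρ hC
  let i : C(Metric.closedBall (0 : W) M, V) := ⟨fun w => (w : W), by fun_prop⟩
  have hlink (h) (hh : h ∈ Metric.closedBall i C) : ∃ w, α ≤ Φ (h w) :=
    (hM h fun w => (dist_eq_norm (h w) (i w)).symm.trans_le
      ((ContinuousMap.dist_apply_le_dist w).trans hh)).imp fun w hw => hα _ hw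
  exact exists_apply_mem_Icc_norm_fderiv_le hΦ hcont hε hC hlink (fun w => hβ _ w.1.2) hlt

/-- **Silva's generalized mountain pass theorem with global estimates.**
Let `V = V₁ ⊕ ℝe ⊕ V₂` be a real Banach space decomposed as a topological
direct sum of closed subspaces, with `dim V₂ < ∞` and `‖e‖ = 1`, and let
`Φ : V → ℝ` be `C¹`. Assume there are `ρ > 0` and `α ≥ 0` with `Φ ≥ α` on
`S_ρ = closure (V₁ \ B(0,ρ)) ∪ ((ℝ⁺e ⊕ V₁) ∩ ∂B(0,ρ))`, and `β` with `Φ ≤ β`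
on `V₂ ⊕ ℝe`. If `Φ` satisfies the local Palais–Smale condition at every level
`c ∈ [α, β]`, then `Φ` possesses a critical value in `[α, β]`. -/
theorem silva_generalized_mountain_pass
    {V : Type*} [NormedAddCommGroup V] [NormedSpace ℝ V] [CompleteSpace V]
    (V₁ V₂ : Submodule ℝ V) (e : V) (he : ‖e‖ = 1)
    (hV₁closed : IsClosed (V₁ : Set V)) (hV₂closed : IsClosed (V₂ : Set V))
    (hfin : FiniteDimensional ℝ V₂)
    -- `V = V₁ ⊕ ℝe ⊕ V₂` (internal topological direct sum of closed subspaces)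
    (hinternal : DirectSum.IsInternal ![V₁, ℝ ∙ e, V₂])
    (Φ : V → ℝ) (Φ' : V → (V →L[ℝ] ℝ))
    (hderiv : ∀ x, HasFDerivAt Φ (Φ' x) x) (hcont : Continuous Φ')
    (ρ α β : ℝ) (hρ : 0 < ρ) (hα : 0 ≤ α)
    -- (a) `Φ ≥ α` on `S_ρ = closure (V₁ \ B(0,ρ)) ∪ ((ℝ⁺e ⊕ V₁) ∩ ∂B(0,ρ))`
    (hSρ : ∀ u ∈ closure ((V₁ : Set V) \ Metric.ball 0 ρ) ∪
        ({x : V | ∃ s : ℝ, 0 ≤ s ∧ ∃ v ∈ V₁, x = s • e + v} ∩ Metric.sphere 0 ρ),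
      α ≤ Φ u)
    -- (b) `Φ ≤ β` on `V₂ ⊕ ℝe`
    (hβ : ∀ u : V, (∃ s : ℝ, ∃ v ∈ V₂, u = s • e + v) → Φ u ≤ β)
    -- local Palais–Smale condition at every level `c ∈ [α, β]`
    (hPS : ∀ c ∈ Set.Icc α β, ∀ u : ℕ → V,
      Tendsto (fun n => Φ (u n)) atTop (nhds c) →
      Tendsto (fun n => ‖Φ' (u n)‖) atTop (nhds 0) →
      ∃ φ : ℕ → ℕ, StrictMono φ ∧ ∃ v : V, Tendsto (u ∘ φ) atTop (nhds v)) :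
    ∃ u : V, Φ' u = 0 ∧ α ≤ Φ u ∧ Φ u ≤ β := by
  have Φ_le (u : V) (hu : u ∈ (ℝ ∙ e) ⊔ V₂) : Φ u ≤ β := by
    obtain ⟨_, hs, v, hv, rfl⟩ := Submodule.mem_sup.1 hu
    obtain ⟨s, rfl⟩ := Submodule.mem_span_singleton.1 hs
    exact hβ _ ⟨s, v, hv, rfl⟩
  exact silva_generalized_mountain_pass_general hV₁closed (isCompl_sup_of_isInternal hinternal)
    (Submodule.mem_sup_left (Submodule.mem_span_singleton_self e))
    (norm_pos_iff.1 (he ▸ one_pos)) hderiv hcont hSρ Φ_le hPS
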